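/- Define the bilinear map B : ℝ⁴ × ℝ⁴ → ℝ⁴ for 3-matchings by B(u,v) = (u₁v₁+u₁v₂, u₁v₃+u₂v₁+u₂v₂, u₃v₁+u₄v₄, u₄v₁), with V₀ = (1,0,0,1) and F = (1,1,1,0). Letting α ∈ (1,2) be the real root of x⁴ − x³ − 1, there exists a finite set X ⊆ ℝ⁴ (with coordinates polynomial in α) containing V₀/α in its convex hull such that B(u,v) ∈ conv(X) for all u,v ∈ X; consequently the number of 3-matchings of every tree of order n is at most C·αⁿ for some constant C. -/

import Mathlib

/-- distance between two edges of a graph: the minimum graph distance between an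
endpoint of one and an endpoint of the other. -/
noncomputable def edgeDist {V : Type*} (G : SimpleGraph V) (e f : Sym2 V) : ℕ :=
  sInf {d : ℕ | ∃ u ∈ e, ∃ v ∈ f, d = G.dist u v}

/-- an `r`-matching: a set of edges of `G`, any two distinct ones at distance at
least `r`. -/
def IsRMatching {V : Type*} (G : SimpleGraph V) (r : ℕ) (M : Set (Sym2 V)) : Prop :=
  M ⊆ G.edgeSet ∧ ∀ e ∈ M, ∀ f ∈ M, e ≠ f → r ≤ edgeDist G e f

/-- The bilinear map of the statement. -/
def BB (u v : Fin 4 → ℝ) : Fin 4 → ℝ :=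
  ![u 0 * v 0 + u 0 * v 1, u 0 * v 2 + u 1 * v 0 + u 1 * v 1,
    u 2 * v 0 + u 3 * v 3, u 3 * v 0]

/-- The nine extremal vectors, `b = 1 / α`. -/
noncomputable def Yv (b : ℝ) : Fin 9 → Fin 4 → ℝ :=
  ![![4 * b ^ 7, 4 * b ^ 7, 2 * b ^ 7, b ^ 7],
    ![b ^ 5, 3 * b ^ 5, b ^ 5, b ^ 5],
    ![b ^ 4, 0, 3 * b ^ 4, b ^ 4],
    ![b ^ 4, 2 * b ^ 4, b ^ 4, b ^ 4],
    ![2 * b ^ 4, b ^ 4, b ^ 4, b ^ 4],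
    ![b ^ 3, 0, 2 * b ^ 3, b ^ 3],
    ![b ^ 3, b ^ 3, b ^ 3, b ^ 3],
    ![b ^ 2, 0, b ^ 2, b ^ 2],
    ![b, 0, 0, b]]

/-- All coordinate projections of the nine vectors. -/
def XS (b : ℝ) : Set (Fin 4 → ℝ) := {x | ∃ j, ∀ i, x i = 0 ∨ x i = Yv b j i}

lemma XS_finite (b : ℝ) : (XS b).Finite := by
  have h : (⋃ j : Fin 9, Set.pi Set.univ (fun i : Fin 4 => ({0, Yv b j i} : Set ℝ))).Finite := by
    refine Set.finite_iUnion fun j => Set.Finite.pi fun i => ?_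
    exact Set.toFinite _
  refine h.subset ?_
  rintro x ⟨j, hj⟩
  simp only [Set.mem_iUnion, Set.mem_pi, Set.mem_univ, forall_true_left]
  exact ⟨j, fun i => by simpa using hj i⟩

def tblI : Fin 9 → Fin 9 → Fin 9 × Fin 9 × Fin 9 :=
  ![![(0,3,0), (0,3,0), (1,1,1), (0,3,0), (0,3,0), (1,1,1), (0,3,0), (3,3,3), (3,4,6)],
    ![(1,1,1), (1,1,1), (1,1,1), (1,1,1), (1,1,1), (1,3,1), (1,1,1), (3,3,3), (2,3,2)],
    ![(4,5,6), (4,5,7), (2,3,2), (4,5,6), (2,6,2), (2,3,2), (2,6,2), (2,3,2), (2,2,2)],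
    ![(1,3,1), (1,3,1), (1,3,1), (1,3,1), (1,3,1), (3,3,3), (1,3,1), (2,3,2), (2,3,2)],
    ![(0,4,0), (0,4,0), (1,1,1), (0,4,0), (0,4,0), (1,3,1), (0,0,0), (3,6,3), (4,5,6)],
    ![(4,5,7), (4,7,4), (2,3,2), (4,5,4), (5,6,5), (2,3,2), (5,6,5), (2,3,2), (2,2,2)],
    ![(0,3,4), (0,3,0), (3,3,3), (0,3,0), (3,6,3), (2,3,2), (3,6,3), (2,3,2), (2,3,2)],
    ![(4,7,8), (4,7,8), (2,3,2), (4,7,4), (4,5,4), (2,3,2), (4,5,6), (2,3,2), (5,5,5)],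
    ![(4,8,4), (4,8,4), (1,1,1), (4,8,4), (4,8,4), (3,3,3), (4,4,4), (6,6,6), (7,7,7)]]

noncomputable def tblL (b : ℝ) : Fin 9 → Fin 9 → ℝ × ℝ × ℝ :=
  ![![(0.65,0.33,0), (0.63,0.32,0), (0.89,0,0), (0.56,0.43,0), (0.56,0.43,0), (0.9,0,0), (0.39,0.59,0), (0.9,0,0), (0.32,0.32,0.23)],
    ![(0.95,0,0), (0.93,0,0), (0.78,0,0), (0.96,0,0), (0.96,0,0), (0.48,0.35,0), (0.94,0,0), (0.88,0,0), (0.09,0.84,0)],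
    ![(0.07,0.57,0.15), (0.32,0.23,0.17), (0.29,0.53,0), (0.2,0.43,0.14), (0.64,0.23,0), (0.44,0.44,0), (0.48,0.35,0), (0.66,0.28,0), (0.98,0,0)],
    ![(0.3,0.66,0), (0.3,0.64,0), (0.48,0.35,0), (0.39,0.57,0), (0.39,0.57,0), (0.88,0,0), (0.55,0.4,0), (0.09,0.84,0), (0.25,0.74,0)],
    ![(0.56,0.43,0), (0.55,0.42,0), (0.94,0,0), (b,b^4,0), (b,b^4,0), (0.55,0.4,0), (1,0,0), (0.55,0.4,0), (0.39,0.28,0.28)],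
    ![(0.36,0.39,0.09), (0.38,0.4,0), (0.22,0.66,0), (0.48,0.35,0), (0.61,0.3,0), (0.37,0.56,0), (0.44,0.44,0), (0.61,0.37,0), (1,0,0)],
    ![(0.49,0.38,0.06), (0.6,0.31,0), (0.88,0,0), (0.53,0.41,0), (0.39,0.57,0), (0.09,0.84,0), (0.55,0.4,0), (0.25,0.74,0), (1/2,1/2,0)],
    ![(0.45,0.36,0.09), (0.45,0.24,0.17), (0.09,0.84,0), (0.59,0.31,0), (0.55,0.4,0), (0.25,0.74,0), (0.39,0.28,0.28), (1/2,1/2,0), (1,0,0)],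
    ![(0.56,0.43,0), (0.55,0.42,0), (1,0,0), (b,b^4,0), (b,b^4,0), (1,0,0), (1,0,0), (1,0,0), (1,0,0)]]

lemma Yv_nonneg {b : ℝ} (hb : 0 ≤ b) (j : Fin 9) (i : Fin 4) : 0 ≤ Yv b j i := by
  fin_cases j <;> fin_cases i <;> simp [Yv] <;> positivity

set_option maxHeartbeats 4000000 in
lemma cert {b : ℝ} (h0 : 0.72449 ≤ b) (h1 : b ≤ 0.7245) (hb : b + b ^ 4 = 1) (j k : Fin 9) :
    0 ≤ (tblL b j k).1 ∧ 0 ≤ (tblL b j k).2.1 ∧ 0 ≤ (tblL b j k).2.2 ∧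
    (tblL b j k).1 + (tblL b j k).2.1 + (tblL b j k).2.2 ≤ 1 ∧
    ∀ i, BB (Yv b j) (Yv b k) i ≤ (tblL b j k).1 * Yv b (tblI j k).1 i +
      (tblL b j k).2.1 * Yv b (tblI j k).2.1 i + (tblL b j k).2.2 * Yv b (tblI j k).2.2 i := by
  have hp : 0 ≤ b := by linarith
  have L : ∀ n : ℕ, (0.72449 : ℝ) ^ n ≤ b ^ n := fun n => pow_le_pow_left₀ (by norm_num) h0 n
  have U : ∀ n : ℕ, b ^ n ≤ (0.7245 : ℝ) ^ n := fun n => pow_le_pow_left₀ hp h1 n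
  have l2 : 52484 ≤ 100000 * b ^ 2 := by have := L 2; norm_num at this ⊢; linarith
  have l3 : 38023 ≤ 100000 * b ^ 3 := by have := L 3; norm_num at this ⊢; linarith
  have l4 : 27546 ≤ 100000 * b ^ 4 := by have := L 4; norm_num at this ⊢; linarith
  have l5 : 19956 ≤ 100000 * b ^ 5 := by have := L 5; norm_num at this ⊢; linarith
  have l7 : 10472 ≤ 100000 * b ^ 7 := by have := L 7; norm_num at this ⊢; linarith
  have u6 : 100000 * b ^ 6 ≤ 14468 := by have := U 6; norm_num at this ⊢; linarith
  have u7 : 100000 * b ^ 7 ≤ 10483 := by have := U 7; norm_num at this ⊢; linarith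
  have u8 : 100000 * b ^ 8 ≤ 7597 := by have := U 8; norm_num at this ⊢; linarith
  have u9 : 100000 * b ^ 9 ≤ 5506 := by have := U 9; norm_num at this ⊢; linarith
  have u10 : 100000 * b ^ 10 ≤ 3991 := by have := U 10; norm_num at this ⊢; linarith
  have u11 : 100000 * b ^ 11 ≤ 2893 := by have := U 11; norm_num at this ⊢; linarith
  have u12 : 100000 * b ^ 12 ≤ 2098 := by have := U 12; norm_num at this ⊢; linarith
  have u14 : 100000 * b ^ 14 ≤ 1104 := by have := U 14; norm_num at this ⊢; linarith
  have p4 : 0 ≤ b ^ 4 := by positivity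
  have p5 : 0 ≤ b ^ 5 := by positivity
  have p6 : 0 ≤ b ^ 6 := by positivity
  have p8 : 0 ≤ b ^ 8 := by positivity
  have u5 : 100000 * b ^ 5 ≤ 19967 := by have := U 5; norm_num at this ⊢; linarith
  clear L U h0 h1
  fin_cases j <;> fin_cases k <;>
    (simp only [tblL, tblI, Yv, BB, Fin.forall_fin_succ,
      Fin.zero_eta, Fin.mk_one, Fin.reduceFinMk, Matrix.cons_val, Matrix.cons_val_zero,
      Matrix.cons_val_one, Fin.isValue, Fin.succ_zero_eq_one, Fin.succ_one_eq_two, Fin.reduceSucc,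
      IsEmpty.forall_iff, and_true]
     refine ⟨?_, ?_, ?_, ?_, ?_, ?_, ?_, ?_⟩ <;> first | (norm_num1; done) | linarith)


lemma box_mem {b : ℝ} (hb : 0 ≤ b) (j : Fin 9) (w : Fin 4 → ℝ) (h0 : ∀ i, 0 ≤ w i)
    (h1 : ∀ i, w i ≤ Yv b j i) : w ∈ convexHull ℝ (XS b) := by
  have hsub : Set.pi Set.univ (fun i : Fin 4 => ({0, Yv b j i} : Set ℝ)) ⊆ XS b := by
    intro x hx
    exact ⟨j, fun i => by simpa using hx i (Set.mem_univ i)⟩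
  refine convexHull_mono hsub ?_
  refine mem_convexHull_pi fun i _ => ?_
  rw [convexHull_pair, segment_eq_Icc (Yv_nonneg hb j i)]
  exact ⟨h0 i, h1 i⟩

lemma XS_bounds {b : ℝ} (hb : 0 ≤ b) {x : Fin 4 → ℝ} (hx : x ∈ XS b) :
    ∃ j, ∀ i, 0 ≤ x i ∧ x i ≤ Yv b j i := by
  obtain ⟨j, hj⟩ := hx
  refine ⟨j, fun i => ?_⟩
  have := Yv_nonneg hb j i
  rcases hj i with h | h <;> rw [h] <;> simp [this]

lemma hull_nonneg {b : ℝ} (hb : 0 ≤ b) {p : Fin 4 → ℝ} (hp : p ∈ convexHull ℝ (XS b)) :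
    ∀ i, 0 ≤ p i := by
  have hc : Convex ℝ {p : Fin 4 → ℝ | ∀ i, 0 ≤ p i} := by
    intro x hx y hy s t hs ht _ i
    have := hx i
    have := hy i
    simp only [Pi.add_apply, Pi.smul_apply, smul_eq_mul]
    positivity
  refine convexHull_min (fun x hx => ?_) hc hp
  obtain ⟨j, hj⟩ := XS_bounds hb hx
  exact fun i => (hj i).1

lemma hull_le_one {b : ℝ} (hb : 0 ≤ b) (hb1 : b ≤ 1) {p : Fin 4 → ℝ}
    (hp : p ∈ convexHull ℝ (XS b)) : ∀ i, p i ≤ 4 := by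
  have hc : Convex ℝ {p : Fin 4 → ℝ | ∀ i, p i ≤ 4} := by
    intro x hx y hy s t hs ht hst i
    have := mul_le_mul_of_nonneg_left (hx i) hs
    have := mul_le_mul_of_nonneg_left (hy i) ht
    simp only [Pi.add_apply, Pi.smul_apply, smul_eq_mul]
    nlinarith
  refine convexHull_min (fun x hx => ?_) hc hp
  obtain ⟨j, hj⟩ := XS_bounds hb hx
  refine fun i => (hj i).2.trans ?_
  have h : ∀ n : ℕ, b ^ n ≤ 1 := fun n => pow_le_one₀ hb hb1
  have h2 := h 2
  have h3 := h 3
  have h4 := h 4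
  have h5 := h 5
  have h7 := h 7
  fin_cases j <;> fin_cases i <;> simp [Yv] <;> linarith

lemma hull_down {b : ℝ} (hb : 0 ≤ b) {p w : Fin 4 → ℝ} (hp : p ∈ convexHull ℝ (XS b))
    (h0 : ∀ i, 0 ≤ w i) (h1 : ∀ i, w i ≤ p i) : w ∈ convexHull ℝ (XS b) := by
  have hp0 := hull_nonneg hb hp
  have key : ∀ θ : Fin 4 → ℝ, (∀ i, 0 ≤ θ i) → (∀ i, θ i ≤ 1) →
      (fun i => θ i * p i) ∈ convexHull ℝ (XS b) := by
    intro θ t0 t1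
    have hc : Convex ℝ {p : Fin 4 → ℝ | (fun i => θ i * p i) ∈ convexHull ℝ (XS b)} := by
      intro x hx y hy s t hs ht hst
      have := convex_convexHull ℝ (XS b) hx hy hs ht hst
      simp only [Set.mem_ofPred_eq]
      convert this using 1
      funext i
      simp only [Pi.add_apply, Pi.smul_apply, smul_eq_mul]
      ring
    refine convexHull_min (fun x hx => ?_) hc hp
    obtain ⟨j, hj⟩ := XS_bounds hb hx
    refine box_mem hb j _ (fun i => mul_nonneg (t0 i) (hj i).1) fun i => ?_
    nlinarith [(hj i).1, (hj i).2, t0 i, t1 i]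
  have := key (fun i => w i / p i) (fun i => div_nonneg (h0 i) (hp0 i))
    (fun i => div_le_one_of_le₀ (h1 i) (hp0 i))
  convert this using 1
  funext i
  by_cases h : p i = 0
  · have := h0 i
    have := h1 i
    rw [h]
    simp
    linarith
  · field_simp

lemma BB_mono {u v u' v' : Fin 4 → ℝ} (hu : ∀ i, 0 ≤ u i) (hv : ∀ i, 0 ≤ v i)
    (huu : ∀ i, u i ≤ u' i) (hvv : ∀ i, v i ≤ v' i) :
    ∀ i, 0 ≤ BB u v i ∧ BB u v i ≤ BB u' v' i := by
  have p : ∀ i j, 0 ≤ u i * v j := fun i j => mul_nonneg (hu i) (hv j)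
  have q : ∀ i j, u i * v j ≤ u' i * v' j := fun i j =>
    mul_le_mul (huu i) (hvv j) (hv j) ((hu i).trans (huu i))
  intro i
  fin_cases i <;> simp only [BB, Fin.zero_eta, Fin.mk_one, Fin.reduceFinMk, Matrix.cons_val]
  · exact ⟨by linarith [p 0 0, p 0 1], by linarith [q 0 0, q 0 1]⟩
  · exact ⟨by linarith [p 0 2, p 1 0, p 1 1], by linarith [q 0 2, q 1 0, q 1 1]⟩
  · exact ⟨by linarith [p 2 0, p 3 3], by linarith [q 2 0, q 3 3]⟩
  · exact ⟨p 3 0, q 3 0⟩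

lemma BB_XS {b : ℝ} (h0 : 0.72449 ≤ b) (h1 : b ≤ 0.7245) (hb : b + b ^ 4 = 1)
    {u v : Fin 4 → ℝ} (hu : u ∈ XS b) (hv : v ∈ XS b) : BB u v ∈ convexHull ℝ (XS b) := by
  have hp : 0 ≤ b := by linarith
  obtain ⟨j, hj⟩ := XS_bounds hp hu
  obtain ⟨k, hk⟩ := XS_bounds hp hv
  obtain ⟨c1, c2, c3, c4, c5⟩ := cert h0 h1 hb j k
  have hB := BB_mono (fun i => (hj i).1) (fun i => (hk i).1) (fun i => (hj i).2) (fun i => (hk i).2)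
  have hY : ∀ l, Yv b l ∈ convexHull ℝ (XS b) := fun l =>
    box_mem hp l _ (Yv_nonneg hp l) (fun i => le_rfl)
  have h0m : (0 : Fin 4 → ℝ) ∈ convexHull ℝ (XS b) :=
    box_mem hp 0 _ (fun i => le_rfl) (Yv_nonneg hp 0)
  have hmem := (convex_convexHull ℝ (XS b)).sum_mem (t := Finset.univ)
    (w := ![(tblL b j k).1, (tblL b j k).2.1, (tblL b j k).2.2,
      1 - (tblL b j k).1 - (tblL b j k).2.1 - (tblL b j k).2.2])
    (z := ![Yv b (tblI j k).1, Yv b (tblI j k).2.1, Yv b (tblI j k).2.2, 0])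
    (by
      intro i _
      fin_cases i
      · exact c1
      · exact c2
      · exact c3
      · show 0 ≤ 1 - (tblL b j k).1 - (tblL b j k).2.1 - (tblL b j k).2.2
        linarith)
    (by simp [Fin.sum_univ_four])
    (by
      intro i _
      fin_cases i
      · exact hY _
      · exact hY _
      · exact hY _
      · exact h0m)
  refine hull_down hp hmem (fun i => (hB i).1) fun i => ((hB i).2.trans (c5 i)).trans (le_of_eq ?_)
  simp [Fin.sum_univ_four]

lemma BB_add_left (s t : ℝ) (x y v : Fin 4 → ℝ) :
    BB (s • x + t • y) v = s • BB x v + t • BB y v := by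
  funext i
  fin_cases i <;> simp [BB] <;> ring

lemma BB_add_right (s t : ℝ) (x y v : Fin 4 → ℝ) :
    BB v (s • x + t • y) = s • BB v x + t • BB v y := by
  funext i
  fin_cases i <;> simp [BB] <;> ring

lemma BB_hull {b : ℝ} (h0 : 0.72449 ≤ b) (h1 : b ≤ 0.7245) (hb : b + b ^ 4 = 1)
    {u v : Fin 4 → ℝ} (hu : u ∈ convexHull ℝ (XS b)) (hv : v ∈ convexHull ℝ (XS b)) :
    BB u v ∈ convexHull ℝ (XS b) := by
  have hK := convex_convexHull ℝ (XS b)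
  have step : ∀ u ∈ XS b, BB u v ∈ convexHull ℝ (XS b) := by
    intro u hu
    have hc : Convex ℝ {v : Fin 4 → ℝ | BB u v ∈ convexHull ℝ (XS b)} := by
      intro x hx y hy s t hs ht hst
      simp only [Set.mem_ofPred_eq, BB_add_right]
      exact hK hx hy hs ht hst
    exact convexHull_min (fun x hx => BB_XS h0 h1 hb hu hx) hc hv
  have hc : Convex ℝ {u : Fin 4 → ℝ | BB u v ∈ convexHull ℝ (XS b)} := by
    intro x hx y hy s t hs ht hst
    simp only [Set.mem_ofPred_eq, BB_add_left]
    exact hK hx hy hs ht hst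
  exact convexHull_min step hc hu

lemma b_facts {α : ℝ} (hα : α ∈ Set.Ioo (1 : ℝ) 2) (hroot : α ^ 4 = α ^ 3 + 1) :
    0.72449 ≤ α⁻¹ ∧ α⁻¹ ≤ 0.7245 ∧ α⁻¹ + α⁻¹ ^ 4 = 1 := by
  have hp : 0 < α := by linarith [hα.1]
  have hb : α⁻¹ + α⁻¹ ^ 4 = 1 := by
    field_simp
    linarith
  have hbp : 0 < α⁻¹ := inv_pos.mpr hp
  refine ⟨?_, ?_, hb⟩
  · by_contra h
    push Not at h
    have := pow_le_pow_left₀ hbp.le h.le 4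
    norm_num at *
    linarith
  · by_contra h
    push Not at h
    have := pow_le_pow_left₀ (by norm_num) h.le 4
    norm_num at *
    linarith


section Counting

open scoped Classical

/-- `M` covers the vertex `x`. -/
def cov {V : Type} (M : Finset (Sym2 V)) (x : V) : Prop := ∃ e ∈ M, x ∈ e

/-- 3-matchings of the component of `r` in `H`, expressed with adjacency only. -/
structure Ok {V : Type} (H : SimpleGraph V) (r : V) (M : Finset (Sym2 V)) : Prop where
  edge : ∀ e ∈ M, e ∈ H.edgeSet
  reach : ∀ e ∈ M, ∀ x ∈ e, H.Reachable r x
  far : ∀ e ∈ M, ∀ f ∈ M, e ≠ f → ∀ u ∈ e, ∀ v ∈ f,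
    u ≠ v ∧ ¬ H.Adj u v ∧ ∀ w, H.Adj u w → ¬ H.Adj w v

/-- root at distance at least 2 from the matching -/
def P1 {V : Type} (H : SimpleGraph V) (r : V) (M : Finset (Sym2 V)) : Prop :=
  Ok H r M ∧ ¬ cov M r ∧ ∀ x, H.Adj r x → ¬ cov M x

/-- root at distance exactly 1 -/
def P2 {V : Type} (H : SimpleGraph V) (r : V) (M : Finset (Sym2 V)) : Prop :=
  Ok H r M ∧ ¬ cov M r ∧ ∃ x, H.Adj r x ∧ cov M x

/-- root covered -/
def P3 {V : Type} (H : SimpleGraph V) (r : V) (M : Finset (Sym2 V)) : Prop :=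
  Ok H r M ∧ cov M r

/-- root at distance at least 3 -/
def P4 {V : Type} (H : SimpleGraph V) (r : V) (M : Finset (Sym2 V)) : Prop :=
  P1 H r M ∧ ∀ x y, H.Adj r x → H.Adj x y → ¬ cov M y

/-- number of edge sets with property `P` -/
noncomputable def cnt {V : Type} [Fintype V] (P : Finset (Sym2 V) → Prop) : ℕ :=
  (Finset.univ.filter P).card

/-- the part of `M` in the component of `t` in `H` -/
noncomputable def res {V : Type} (H : SimpleGraph V) (t : V) (M : Finset (Sym2 V)) :
    Finset (Sym2 V) :=
  M.filter fun e => e ∈ H.edgeSet ∧ ∀ x ∈ e, H.Reachable t x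

lemma mem_res {V : Type} {H : SimpleGraph V} {t : V} {M : Finset (Sym2 V)} {e : Sym2 V} :
    e ∈ res H t M ↔ e ∈ M ∧ e ∈ H.edgeSet ∧ ∀ x ∈ e, H.Reachable t x := by
  unfold res
  exact Finset.mem_filter

lemma cnt_or {V : Type} [Fintype V] {P Q R : Finset (Sym2 V) → Prop}
    (h : ∀ M, P M → Q M ∨ R M) : cnt P ≤ cnt Q + cnt R := by
  unfold cnt
  refine le_trans (Finset.card_le_card ?_) (Finset.card_union_le _ _)
  intro M hM
  simpa using h M (by simpa using hM)

lemma cnt_mul {V : Type} [Fintype V] {P Q R : Finset (Sym2 V) → Prop}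
    (f g : Finset (Sym2 V) → Finset (Sym2 V))
    (h : ∀ M, P M → Q (f M) ∧ R (g M))
    (hi : ∀ M N, P M → P N → f M = f N → g M = g N → M = N) : cnt P ≤ cnt Q * cnt R := by
  unfold cnt
  rw [← Finset.card_product]
  refine Finset.card_le_card_of_injOn (fun M => (f M, g M)) ?_ ?_
  · intro M hM
    have hM' : P M := by simpa using hM
    simpa using h M hM'
  · intro M hM N hN hMN
    have hM' : P M := by simpa using hM
    have hN' : P N := by simpa using hN
    simp only [Prod.mk.injEq] at hMN
    exact hi M N hM' hN' hMN.1 hMN.2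

lemma res_cov {V : Type} {H : SimpleGraph V} {t x : V} {M : Finset (Sym2 V)}
    (h : cov (res H t M) x) : cov M x := by
  obtain ⟨e, he, hx⟩ := h
  exact ⟨e, (mem_res.1 he).1, hx⟩

lemma res_ok {V : Type} {H H' : SimpleGraph V} (hle : H' ≤ H) {r t : V} {M : Finset (Sym2 V)}
    (h : Ok H r M) : Ok H' t (res H' t M) where
  edge e he := (mem_res.1 he).2.1
  reach e he := (mem_res.1 he).2.2
  far e he f hf hef u hu v hv := by
    obtain ⟨a, b, c⟩ := h.far e (mem_res.1 he).1 f (mem_res.1 hf).1 hef u hu v hv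
    exact ⟨a, fun h' => b (hle h'), fun w h1 h2 => c w (hle h1) (hle h2)⟩

lemma reach_split {V : Type} {H : SimpleGraph V} {r s : V} {x y : V} (hxy : H.Reachable x y)
    (hx : (H.deleteEdges {s(r, s)}).Reachable r x ∨ (H.deleteEdges {s(r, s)}).Reachable s x) :
    (H.deleteEdges {s(r, s)}).Reachable r y ∨ (H.deleteEdges {s(r, s)}).Reachable s y := by
  obtain ⟨p⟩ := hxy
  induction p with
  | nil => exact hx
  | @cons u v w h p ih =>
    apply ih
    by_cases he : s(u, v) = s(r, s)
    · rcases Sym2.eq_iff.1 he with ⟨rfl, rfl⟩ | ⟨rfl, rfl⟩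
      · exact Or.inr (SimpleGraph.Reachable.refl _)
      · exact Or.inl (SimpleGraph.Reachable.refl _)
    · have ha : (H.deleteEdges {s(r, s)}).Adj u v := by
        rw [SimpleGraph.deleteEdges_adj]
        exact ⟨h, by simpa using he⟩
      exact hx.imp (fun h => h.trans ha.reachable) (fun h => h.trans ha.reachable)

/-- every matching edge other than the root edge lies in one of the two pieces -/
lemma mem_split {V : Type} {H : SimpleGraph V} {r s : V} {M : Finset (Sym2 V)}
    (hM : Ok H r M) {e : Sym2 V} (he : e ∈ M) (hne : e ≠ s(r, s)) :
    e ∈ res (H.deleteEdges {s(r, s)}) r M ∨ e ∈ res (H.deleteEdges {s(r, s)}) s M := by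
  have h1 := hM.edge e he
  have h2 := hM.reach e he
  have h3 : e ∈ (H.deleteEdges {s(r, s)}).edgeSet := by
    rw [SimpleGraph.edgeSet_deleteEdges]
    exact ⟨h1, by simpa using hne⟩
  induction e with
  | h x y =>
    have hx := reach_split (r := r) (s := s) (h2 x (Sym2.mem_mk_left x y))
      (Or.inl (SimpleGraph.Reachable.refl _))
    have ha : (H.deleteEdges {s(r, s)}).Adj x y := h3
    refine hx.imp (fun h => ?_) (fun h => ?_) <;>
    · refine mem_res.2 ⟨he, h3, ?_⟩
      intro z hz
      rcases Sym2.mem_iff.1 hz with rfl | rfl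
      · exact h
      · exact h.trans ha.reachable

lemma eq_of_res {V : Type} {H : SimpleGraph V} {r s : V} {M N : Finset (Sym2 V)}
    (hM : Ok H r M) (hN : Ok H r N) (hMN : s(r, s) ∈ M ↔ s(r, s) ∈ N)
    (h1 : res (H.deleteEdges {s(r, s)}) r M = res (H.deleteEdges {s(r, s)}) r N)
    (h2 : res (H.deleteEdges {s(r, s)}) s M = res (H.deleteEdges {s(r, s)}) s N) : M = N := by
  have aux : ∀ {M N : Finset (Sym2 V)}, Ok H r M → (s(r, s) ∈ M ↔ s(r, s) ∈ N) →
      res (H.deleteEdges {s(r, s)}) r M = res (H.deleteEdges {s(r, s)}) r N →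
      res (H.deleteEdges {s(r, s)}) s M = res (H.deleteEdges {s(r, s)}) s N → M ⊆ N := by
    intro M N hM hMN h1 h2 e he
    by_cases hne : e = s(r, s)
    · subst hne
      exact hMN.1 he
    · rcases mem_split hM he hne with h | h
      · rw [h1] at h
        exact (mem_res.1 h).1
      · rw [h2] at h
        exact (mem_res.1 h).1
  exact Finset.Subset.antisymm (aux hM hMN h1 h2) (aux hN hMN.symm h1.symm h2.symm)

/-- the four counts -/
noncomputable def vec {V : Type} [Fintype V] (H : SimpleGraph V) (r : V) : Fin 4 → ℝ :=
  ![(cnt (P1 H r) : ℝ), (cnt (P2 H r) : ℝ), (cnt (P3 H r) : ℝ), (cnt (P4 H r) : ℝ)]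

/-- size of the component of `r` -/
noncomputable def sz {V : Type} [Fintype V] (H : SimpleGraph V) (r : V) : ℕ :=
  (Finset.univ.filter fun x => H.Reachable r x).card

section Step

variable {V : Type} [Fintype V] {H : SimpleGraph V} {r s : V}

lemma P1_or_P2 {t : V} {M : Finset (Sym2 V)} (h : Ok H t M) (hc : ¬ cov M t) :
    P1 H t M ∨ P2 H t M := by
  by_cases hx : ∃ x, H.Adj t x ∧ cov M x
  · exact Or.inr ⟨h, hc, hx⟩
  · exact Or.inl ⟨h, hc, fun x h1 h2 => hx ⟨x, h1, h2⟩⟩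

lemma cnt_P12 (t : V) : cnt (fun M => P1 H t M ∨ P2 H t M) ≤ cnt (P1 H t) + cnt (P2 H t) :=
  cnt_or fun _ h => h

lemma notMem_of_not_cov {M : Finset (Sym2 V)} (h : ¬ cov M r) : s(r, s) ∉ M :=
  fun he => h ⟨_, he, Sym2.mem_mk_left r s⟩

/-- no edge lies in both pieces -/
lemma ne_of_res (hb : ¬ (H.deleteEdges {s(r, s)}).Reachable r s) {M : Finset (Sym2 V)}
    {e f : Sym2 V} (he : e ∈ res (H.deleteEdges {s(r, s)}) r M)
    (hf : f ∈ res (H.deleteEdges {s(r, s)}) s M) : e ≠ f := by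
  rintro rfl
  have h1 := (mem_res.1 he).2.2
  have h2 := (mem_res.1 hf).2.2
  induction e with
  | h x y =>
    exact hb ((h1 x (Sym2.mem_mk_left x y)).trans (h2 x (Sym2.mem_mk_left x y)).symm)

/-- a covered vertex of the `r` side is covered by the `r` piece -/
lemma cov_left (hb : ¬ (H.deleteEdges {s(r, s)}).Reachable r s) {M : Finset (Sym2 V)}
    (hM : Ok H r M) (he : s(r, s) ∉ M) {x : V} (hx : (H.deleteEdges {s(r, s)}).Reachable r x)
    (hc : cov M x) : cov (res (H.deleteEdges {s(r, s)}) r M) x := by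
  obtain ⟨e, h1, h2⟩ := hc
  have hne : e ≠ s(r, s) := by
    rintro rfl
    exact he h1
  rcases mem_split hM h1 hne with h | h
  · exact ⟨e, h, h2⟩
  · exact absurd (hx.trans ((mem_res.1 h).2.2 x h2).symm) hb

lemma cov_right (hb : ¬ (H.deleteEdges {s(r, s)}).Reachable r s) {M : Finset (Sym2 V)}
    (hM : Ok H r M) (he : s(r, s) ∉ M) {x : V} (hx : (H.deleteEdges {s(r, s)}).Reachable s x)
    (hc : cov M x) : cov (res (H.deleteEdges {s(r, s)}) s M) x := by
  obtain ⟨e, h1, h2⟩ := hc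
  have hne : e ≠ s(r, s) := by
    rintro rfl
    exact he h1
  rcases mem_split hM h1 hne with h | h
  · exact absurd (((mem_res.1 h).2.2 x h2).trans hx.symm) hb
  · exact ⟨e, h, h2⟩

lemma step1 (ha : H.Adj r s) : cnt (P1 H r) ≤ cnt (P1 (H.deleteEdges {s(r, s)}) r) *
      (cnt (P1 (H.deleteEdges {s(r, s)}) s) + cnt (P2 (H.deleteEdges {s(r, s)}) s)) := by
  have hle : H.deleteEdges {s(r, s)} ≤ H := SimpleGraph.deleteEdges_le _
  refine le_trans (cnt_mul (res (H.deleteEdges {s(r, s)}) r) (res (H.deleteEdges {s(r, s)}) s)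
    ?_ ?_) (Nat.mul_le_mul_left _ (cnt_P12 s))
  · rintro M ⟨hM, h1, h2⟩
    exact ⟨⟨res_ok hle hM, fun h => h1 (res_cov h), fun x hx h => h2 x (hle hx) (res_cov h)⟩,
      P1_or_P2 (res_ok hle hM) fun h => h2 s ha (res_cov h)⟩
  · rintro M N ⟨hM, h1, -⟩ ⟨hN, h1', -⟩ e1 e2
    exact eq_of_res hM hN (by simp [notMem_of_not_cov h1, notMem_of_not_cov h1']) e1 e2

lemma step4 (ha : H.Adj r s) : cnt (P4 H r) ≤ cnt (P4 (H.deleteEdges {s(r, s)}) r) *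
      cnt (P1 (H.deleteEdges {s(r, s)}) s) := by
  have hle : H.deleteEdges {s(r, s)} ≤ H := SimpleGraph.deleteEdges_le _
  refine cnt_mul (res (H.deleteEdges {s(r, s)}) r) (res (H.deleteEdges {s(r, s)}) s) ?_ ?_
  · rintro M ⟨⟨hM, h1, h2⟩, h3⟩
    exact ⟨⟨⟨res_ok hle hM, fun h => h1 (res_cov h), fun x hx h => h2 x (hle hx) (res_cov h)⟩,
      fun x y hx hy h => h3 x y (hle hx) (hle hy) (res_cov h)⟩,
      res_ok hle hM, fun h => h2 s ha (res_cov h), fun x hx h => h3 s x ha (hle hx) (res_cov h)⟩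
  · rintro M N ⟨⟨hM, h1, -⟩, -⟩ ⟨⟨hN, h1', -⟩, -⟩ e1 e2
    exact eq_of_res hM hN (by simp [notMem_of_not_cov h1, notMem_of_not_cov h1']) e1 e2

lemma step2 (ha : H.Adj r s) (hb : ¬ (H.deleteEdges {s(r, s)}).Reachable r s) :
    cnt (P2 H r) ≤ cnt (P1 (H.deleteEdges {s(r, s)}) r) * cnt (P3 (H.deleteEdges {s(r, s)}) s) +
      cnt (P2 (H.deleteEdges {s(r, s)}) r) *
      (cnt (P1 (H.deleteEdges {s(r, s)}) s) + cnt (P2 (H.deleteEdges {s(r, s)}) s)) := by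
  have hle : H.deleteEdges {s(r, s)} ≤ H := SimpleGraph.deleteEdges_le _
  refine le_trans (cnt_or (Q := fun M => P2 H r M ∧ cov M s) (R := fun M => P2 H r M ∧ ¬ cov M s)
    fun M hM => ?_) (add_le_add ?_ (le_trans ?_ (Nat.mul_le_mul_left _ (cnt_P12 s))))
  · by_cases h : cov M s
    · exact Or.inl ⟨hM, h⟩
    · exact Or.inr ⟨hM, h⟩
  · refine cnt_mul (res (H.deleteEdges {s(r, s)}) r) (res (H.deleteEdges {s(r, s)}) s) ?_ ?_
    · rintro M ⟨⟨hM, h1, -⟩, hc⟩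
      have hs := cov_right hb hM (notMem_of_not_cov h1) (SimpleGraph.Reachable.refl _) hc
      refine ⟨⟨res_ok hle hM, fun h => h1 (res_cov h), ?_⟩, res_ok hle hM, hs⟩
      rintro x hx ⟨e, he, hxe⟩
      obtain ⟨f, hf, hsf⟩ := hs
      exact (hM.far e (mem_res.1 he).1 f (mem_res.1 hf).1
        (ne_of_res hb he hf) x hxe s hsf).2.2 r (hle hx).symm ha
    · rintro M N ⟨⟨hM, h1, -⟩, -⟩ ⟨⟨hN, h1', -⟩, -⟩ e1 e2
      exact eq_of_res hM hN (by simp [notMem_of_not_cov h1, notMem_of_not_cov h1']) e1 e2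
  · refine cnt_mul (res (H.deleteEdges {s(r, s)}) r) (res (H.deleteEdges {s(r, s)}) s) ?_ ?_
    · rintro M ⟨⟨hM, h1, x, hx, hcx⟩, hc⟩
      refine ⟨⟨res_ok hle hM, fun h => h1 (res_cov h), x, ?_⟩,
        P1_or_P2 (res_ok hle hM) fun h => hc (res_cov h)⟩
      have hxs : x ≠ s := by
        rintro rfl
        exact hc hcx
      have hx' : (H.deleteEdges {s(r, s)}).Adj r x := by
        rw [SimpleGraph.deleteEdges_adj]
        refine ⟨hx, ?_⟩
        simp [hxs, ha.ne]
      exact ⟨hx', cov_left hb hM (notMem_of_not_cov h1) hx'.reachable hcx⟩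
    · rintro M N ⟨⟨hM, h1, -⟩, -⟩ ⟨⟨hN, h1', -⟩, -⟩ e1 e2
      exact eq_of_res hM hN (by simp [notMem_of_not_cov h1, notMem_of_not_cov h1']) e1 e2

lemma root_notMem_res {M : Finset (Sym2 V)} {t : V} {e : Sym2 V}
    (he : e ∈ res (H.deleteEdges {s(r, s)}) t M) : s(r, s) ≠ e := by
  rintro rfl
  have := (mem_res.1 he).2.1
  simp at this

lemma step3 (ha : H.Adj r s) (hb : ¬ (H.deleteEdges {s(r, s)}).Reachable r s) :
    cnt (P3 H r) ≤ cnt (P3 (H.deleteEdges {s(r, s)}) r) * cnt (P1 (H.deleteEdges {s(r, s)}) s) +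
      cnt (P4 (H.deleteEdges {s(r, s)}) r) * cnt (P4 (H.deleteEdges {s(r, s)}) s) := by
  have hle : H.deleteEdges {s(r, s)} ≤ H := SimpleGraph.deleteEdges_le _
  refine le_trans (cnt_or (Q := fun M => P3 H r M ∧ s(r, s) ∉ M)
    (R := fun M => P3 H r M ∧ s(r, s) ∈ M) fun M hM => ?_) (add_le_add ?_ ?_)
  · by_cases h : s(r, s) ∈ M
    · exact Or.inr ⟨hM, h⟩
    · exact Or.inl ⟨hM, h⟩
  · refine cnt_mul (res (H.deleteEdges {s(r, s)}) r) (res (H.deleteEdges {s(r, s)}) s) ?_ ?_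
    · rintro M ⟨⟨hM, hc⟩, hn⟩
      have hr := cov_left hb hM hn (SimpleGraph.Reachable.refl _) hc
      refine ⟨⟨res_ok hle hM, hr⟩, res_ok hle hM, ?_, ?_⟩
      · rintro ⟨f, hf, hsf⟩
        obtain ⟨e, he, hre⟩ := hr
        exact (hM.far e (mem_res.1 he).1 f (mem_res.1 hf).1
          (ne_of_res hb he hf) r hre s hsf).2.1 ha
      · rintro x hx ⟨f, hf, hxf⟩
        obtain ⟨e, he, hre⟩ := hr
        exact (hM.far e (mem_res.1 he).1 f (mem_res.1 hf).1
          (ne_of_res hb he hf) r hre x hxf).2.2 s ha (hle hx)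
    · rintro M N ⟨⟨hM, -⟩, h1⟩ ⟨⟨hN, -⟩, h1'⟩ e1 e2
      exact eq_of_res hM hN (by simp [h1, h1']) e1 e2
  · refine cnt_mul (res (H.deleteEdges {s(r, s)}) r) (res (H.deleteEdges {s(r, s)}) s) ?_ ?_
    · rintro M ⟨⟨hM, -⟩, hm⟩
      have key : ∀ t ∈ s(r, s), P4 (H.deleteEdges {s(r, s)}) t
          (res (H.deleteEdges {s(r, s)}) t M) := by
        intro t ht
        refine ⟨⟨res_ok hle hM, ?_, ?_⟩, ?_⟩
        · rintro ⟨e, he, h⟩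
          exact (hM.far _ hm e (mem_res.1 he).1 (root_notMem_res he) t ht t h).1 rfl
        · rintro x hx ⟨e, he, h⟩
          exact (hM.far _ hm e (mem_res.1 he).1 (root_notMem_res he) t ht x h).2.1 (hle hx)
        · rintro x y hx hy ⟨e, he, h⟩
          exact (hM.far _ hm e (mem_res.1 he).1 (root_notMem_res he) t ht y h).2.2 x
            (hle hx) (hle hy)
      exact ⟨key r (Sym2.mem_mk_left r s), key s (Sym2.mem_mk_right r s)⟩
    · rintro M N ⟨⟨hM, -⟩, h1⟩ ⟨⟨hN, -⟩, h1'⟩ e1 e2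
      exact eq_of_res hM hN (by simp [h1, h1']) e1 e2

lemma sz_split (ha : H.Adj r s) (hb : ¬ (H.deleteEdges {s(r, s)}).Reachable r s) :
    sz H r = sz (H.deleteEdges {s(r, s)}) r + sz (H.deleteEdges {s(r, s)}) s := by
  have hle : H.deleteEdges {s(r, s)} ≤ H := SimpleGraph.deleteEdges_le _
  unfold sz
  rw [← Finset.card_union_of_disjoint]
  · congr 1
    ext x
    simp only [Finset.mem_filter, Finset.mem_univ, true_and, Finset.mem_union]
    constructor
    · intro h
      exact reach_split h (Or.inl (SimpleGraph.Reachable.refl _))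
    · rintro (h | h)
      · exact h.mono hle
      · exact ha.reachable.trans (h.mono hle)
  · rw [Finset.disjoint_left]
    intro x h1 h2
    simp only [Finset.mem_filter, Finset.mem_univ, true_and] at h1 h2
    exact hb (h1.trans h2.symm)

lemma vec_step (ha : H.Adj r s) (hb : ¬ (H.deleteEdges {s(r, s)}).Reachable r s) (i : Fin 4) :
    vec H r i ≤ BB (vec (H.deleteEdges {s(r, s)}) r) (vec (H.deleteEdges {s(r, s)}) s) i := by
  have h1 : ((_ : ℕ) : ℝ) ≤ ((_ : ℕ) : ℝ) := Nat.cast_le.2 (step1 ha)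
  have h2 : ((_ : ℕ) : ℝ) ≤ ((_ : ℕ) : ℝ) := Nat.cast_le.2 (step2 ha hb)
  have h3 : ((_ : ℕ) : ℝ) ≤ ((_ : ℕ) : ℝ) := Nat.cast_le.2 (step3 ha hb)
  have h4 : ((_ : ℕ) : ℝ) ≤ ((_ : ℕ) : ℝ) := Nat.cast_le.2 (step4 ha)
  push_cast at h1 h2 h3 h4
  fin_cases i <;> simp only [BB, vec, Fin.zero_eta, Fin.mk_one, Fin.reduceFinMk, Matrix.cons_val,
    Matrix.cons_val_zero, Matrix.cons_val_one]
  · linarith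
  · linarith
  · exact h3
  · exact h4

lemma vec_nonneg (i : Fin 4) : 0 ≤ vec H r i := by
  fin_cases i <;> simp [vec]

/-- isolated root -/
lemma isolated (hiso : ∀ s, ¬ H.Adj r s) : sz H r = 1 ∧ ∀ M, Ok H r M → M = ∅ := by
  have hr : ∀ x, H.Reachable r x → x = r := by
    rintro x ⟨p⟩
    cases p with
    | nil => rfl
    | cons h p => exact absurd h (hiso _)
  constructor
  · unfold sz
    rw [Finset.card_eq_one]
    refine ⟨r, ?_⟩
    ext x
    simp only [Finset.mem_filter, Finset.mem_univ, true_and, Finset.mem_singleton]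
    exact ⟨hr x, fun h => h ▸ SimpleGraph.Reachable.refl _⟩
  · intro M hM
    rw [Finset.eq_empty_iff_forall_notMem]
    intro e he
    have h1 := hM.edge e he
    have h2 := hM.reach e he
    induction e with
    | h x y =>
      have h3 : H.Adj x y := h1
      rw [hr x (h2 x (Sym2.mem_mk_left x y))] at h3
      exact hiso y h3

lemma cnt_le_one {P : Finset (Sym2 V) → Prop} (h : ∀ M, P M → M = ∅) : cnt P ≤ 1 := by
  unfold cnt
  rw [Finset.card_le_one]
  intro M hM N hN
  rw [h M (by simpa using hM), h N (by simpa using hN)]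

lemma cnt_zero {P : Finset (Sym2 V) → Prop} (h : ∀ M, ¬ P M) : cnt P = 0 := by
  unfold cnt
  rw [Finset.card_eq_zero, Finset.filter_eq_empty_iff]
  exact fun M _ => h M

end Step

lemma vec_mem {V : Type} [Fintype V] {b : ℝ} (h0 : 0.72449 ≤ b) (h1 : b ≤ 0.7245)
    (hb : b + b ^ 4 = 1) (k : ℕ) : ∀ (H : SimpleGraph V) (r : V), H.IsAcyclic →
    H.edgeSet.ncard = k → (b ^ sz H r) • vec H r ∈ convexHull ℝ (XS b) := by
  have hp : 0 ≤ b := by linarith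
  induction k using Nat.strong_induction_on with
  | _ k ih =>
    intro H r hac hk
    by_cases hiso : ∃ s, H.Adj r s
    · obtain ⟨s, ha⟩ := hiso
      have hbr : ¬ (H.deleteEdges {s(r, s)}).Reachable r s := by
        have := SimpleGraph.isAcyclic_iff_forall_adj_isBridge.1 hac ha
        rwa [SimpleGraph.isBridge_iff] at this
      have hle : H.deleteEdges {s(r, s)} ≤ H := SimpleGraph.deleteEdges_le _
      have hac' := hac.anti hle
      have hlt : (H.deleteEdges {s(r, s)}).edgeSet.ncard < k := by
        rw [← hk, SimpleGraph.edgeSet_deleteEdges]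
        exact Set.ncard_sdiff_singleton_lt_of_mem ha (Set.toFinite _)
      have A := ih _ hlt _ r hac' rfl
      have B := ih _ hlt _ s hac' rfl
      refine hull_down hp (BB_hull h0 h1 hb A B) (fun i => ?_) (fun i => ?_)
      · exact mul_nonneg (pow_nonneg hp _) (vec_nonneg i)
      · have h := mul_le_mul_of_nonneg_left (vec_step ha hbr i) (pow_nonneg hp (sz H r))
        refine le_trans h (le_of_eq ?_)
        rw [sz_split ha hbr, pow_add]
        fin_cases i <;> simp [BB] <;> ring
    · push Not at hiso
      obtain ⟨hs, hM⟩ := isolated hiso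
      rw [hs, pow_one]
      refine box_mem hp 8 _ (fun i => mul_nonneg hp (vec_nonneg i)) fun i => ?_
      have c1 : (cnt (P1 H r) : ℝ) ≤ 1 := by
        exact_mod_cast cnt_le_one (P := P1 H r) fun M h => hM M h.1
      have c4 : (cnt (P4 H r) : ℝ) ≤ 1 := by
        exact_mod_cast cnt_le_one (P := P4 H r) fun M h => hM M h.1.1
      have c2 : cnt (P2 H r) = 0 := cnt_zero fun M h => by
        obtain ⟨-, -, x, hx, -⟩ := h
        exact hiso x hx
      have c3 : cnt (P3 H r) = 0 := cnt_zero fun M h => by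
        obtain ⟨h, e, he, -⟩ := h
        rw [hM M h] at he
        simp at he
      fin_cases i <;> simp [vec, Yv, c2, c3] <;> nlinarith

lemma three_le_dist {V : Type} {T : SimpleGraph V} {M : Set (Sym2 V)} (h : IsRMatching T 3 M)
    {e f : Sym2 V} (he : e ∈ M) (hf : f ∈ M) (hef : e ≠ f) {u v : V} (hu : u ∈ e) (hv : v ∈ f) :
    3 ≤ T.dist u v :=
  (h.2 e he f hf hef).trans (Nat.sInf_le ⟨u, hu, v, hv, rfl⟩)

lemma card_bound {n : ℕ} (T : SimpleGraph (Fin n)) (hT : T.Connected) (r : Fin n) :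
    Nat.card {M : Set (Sym2 (Fin n)) // IsRMatching T 3 M} ≤
      cnt (P1 T r) + cnt (P2 T r) + cnt (P3 T r) := by
  have hok : ∀ M : Set (Sym2 (Fin n)), IsRMatching T 3 M → Ok T r M.toFinset := by
    intro M hM
    refine ⟨fun e he => hM.1 (by simpa using he), fun e _ x _ => hT.preconnected r x, ?_⟩
    intro e he f hf hef u hu v hv
    have hd := three_le_dist hM (by simpa using he) (by simpa using hf) hef hu hv
    refine ⟨?_, ?_, ?_⟩
    · rintro rfl
      simp at hd
    · intro h
      rw [SimpleGraph.dist_eq_one_iff_adj.2 h] at hd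
      omega
    · intro w h1 h2
      have := SimpleGraph.dist_le (SimpleGraph.Walk.cons h1 (SimpleGraph.Walk.cons h2 .nil))
      simp at this
      omega
  have h1 : Nat.card {M : Set (Sym2 (Fin n)) // IsRMatching T 3 M} ≤
      Nat.card {M : Finset (Sym2 (Fin n)) // Ok T r M} := by
    refine Nat.card_le_card_of_injective
      (fun M => (⟨M.1.toFinset, hok M.1 M.2⟩ : {M : Finset (Sym2 (Fin n)) // Ok T r M})) ?_
    intro M N h
    simp only [Subtype.mk.injEq, Set.toFinset_inj] at h
    exact Subtype.ext h
  have h2 : Nat.card {M : Finset (Sym2 (Fin n)) // Ok T r M} = cnt (Ok T r) := by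
    rw [Nat.card_eq_fintype_card, Fintype.card_subtype]
    rfl
  rw [h2] at h1
  refine h1.trans ?_
  refine le_trans (cnt_or (Q := fun M => P1 T r M ∨ P2 T r M) (R := P3 T r) fun M hM => ?_)
    (Nat.add_le_add_right (cnt_P12 r) _)
  by_cases h : cov M r
  · exact Or.inr ⟨hM, h⟩
  · exact Or.inl (P1_or_P2 hM h)

end Counting


theorem stmt_18 (α : ℝ) (hα : α ∈ Set.Ioo (1 : ℝ) 2) (hroot : α ^ 4 = α ^ 3 + 1) :
    let B : (Fin 4 → ℝ) → (Fin 4 → ℝ) → (Fin 4 → ℝ) := fun u v =>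
      ![u 0 * v 0 + u 0 * v 1, u 0 * v 2 + u 1 * v 0 + u 1 * v 1,
        u 2 * v 0 + u 3 * v 3, u 3 * v 0]
    let V₀ : Fin 4 → ℝ := ![1, 0, 0, 1]
    let F : Fin 4 → ℝ := ![1, 1, 1, 0]
    (∃ X : Set (Fin 4 → ℝ), X.Finite ∧ α⁻¹ • V₀ ∈ convexHull ℝ X ∧
      ∀ u ∈ X, ∀ v ∈ X, B u v ∈ convexHull ℝ X) ∧
    ∃ C : ℝ, 0 < C ∧ ∀ (n : ℕ) (T : SimpleGraph (Fin n)),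
      T.Connected → T.IsAcyclic →
      (Nat.card {M : Set (Sym2 (Fin n)) // IsRMatching T 3 M} : ℝ) ≤ C * α ^ n := by
  intro B V₀ F
  obtain ⟨h0, h1, hb⟩ := b_facts hα hroot
  have hp : 0 ≤ α⁻¹ := by linarith
  have hαp : 0 < α := by linarith [hα.1]
  refine ⟨⟨XS α⁻¹, XS_finite _, ?_, fun u hu v hv => BB_XS h0 h1 hb hu hv⟩, 12, by norm_num, ?_⟩
  · refine box_mem hp 8 _ (fun i => ?_) fun i => ?_
    · fin_cases i <;> simp [V₀] <;> linarith
    · fin_cases i <;> simp [V₀, Yv]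
  · intro n T hT hac
    obtain ⟨r⟩ := hT.nonempty
    have hmem := vec_mem h0 h1 hb _ T r hac rfl
    have hsz : sz T r = n := by
      have : ∀ x, T.Reachable r x := fun x => hT.preconnected r x
      simp [sz, this]
    rw [hsz] at hmem
    have hle := hull_le_one hp (by linarith) hmem
    have a0 := hle 0
    have a1 := hle 1
    have a2 := hle 2
    simp only [Pi.smul_apply, smul_eq_mul, vec, Matrix.cons_val_zero, Matrix.cons_val_one,
      Matrix.cons_val] at a0 a1 a2
    have hcard : (Nat.card {M : Set (Sym2 (Fin n)) // IsRMatching T 3 M} : ℝ) ≤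
        cnt (P1 T r) + cnt (P2 T r) + cnt (P3 T r) := by
      exact_mod_cast card_bound T hT r
    have hpow : 0 < α ^ n := by positivity
    have hinv : α⁻¹ ^ n * α ^ n = 1 := by
      rw [← mul_pow, inv_mul_cancel₀ hαp.ne', one_pow]
    have hsum : α⁻¹ ^ n * ((cnt (P1 T r) : ℝ) + cnt (P2 T r) + cnt (P3 T r)) ≤ 12 := by
      linarith
    have := mul_le_mul_of_nonneg_right hsum hpow.le
    calc _ ≤ _ := hcard
      _ = (α⁻¹ ^ n * α ^ n) * ((cnt (P1 T r) : ℝ) + cnt (P2 T r) + cnt (P3 T r)) := by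
        rw [hinv, one_mul]
      _ = α⁻¹ ^ n * ((cnt (P1 T r) : ℝ) + cnt (P2 T r) + cnt (P3 T r)) * α ^ n := by ring
      _ ≤ _ := this
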